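/- Let μ_1, …, μ_n be probability measures on [0,1], let ε ∈ (0,1), and let q_{−1} := −1 < 0 ≤ q_0 < q_1 < ⋯ < q_{M+1} = 1 be a finite grid. For each i ∈ [n] let μ̃_i be a discrete probability measure supported on {q_0, …, q_{M+1}} satisfying (1+ε)^{−2} · μ_i((q_{l−1}, q_l] ∩ [0,1]) ≤ μ̃_i({q_l}) ≤ (1+ε)^{2} · μ_i((q_{l−1}, q_l] ∩ [0,1]) for all l ∈ {0, …, M+1}. Let B ⊆ {q_0, …, q_{M+1}}^n be a finite set and c ∈ ℝ^n with c ≥ 0. Then B is a Pareto cover of μ := ∏_{i=1}^n μ_i if and only if B is a Pareto cover of μ̃ := ∏_{i=1}^n μ̃_i, and in that case (1+ε)^{−2n} · E_μ[c_B] ≤ E_{μ̃}[c_B] ≤ (1+ε)^{2n} · E_μ[c_B]. -/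

import Mathlib

open MeasureTheory

/-- `c_B(x) = min { cᵀb : b ∈ B, x ≤ b }` for a finite set `B ⊆ [0,1]^n`
(with the convention `sInf ∅ = 0`; for a Pareto cover the uncovered points
have measure zero). -/
noncomputable def paretoMinF {n : ℕ} (c : Fin n → ℝ) (B : Finset (Fin n → ℝ))
    (x : Fin n → ℝ) : ℝ :=
  sInf ((fun b => ∑ i, c i * b i) '' {b | b ∈ B ∧ x ≤ b})

lemma pi_le_aux {n : ℕ} (ν ν' : Fin n → Measure ℕ)
    [∀ i, IsProbabilityMeasure (ν i)] [∀ i, IsProbabilityMeasure (ν' i)]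
    (C : ENNReal) (h : ∀ i l, ν i {l} ≤ C * ν' i {l}) :
    Measure.pi ν ≤ (C ^ n) • Measure.pi ν' := by
  refine Measure.le_iff.2 fun s _ => ?_
  have hs : MeasurableSet s := s.to_countable.measurableSet
  rw [← Measure.tsum_indicator_apply_singleton _ s hs,
    ← Measure.tsum_indicator_apply_singleton (C ^ n • Measure.pi ν') s hs]
  refine ENNReal.tsum_le_tsum fun x => ?_
  refine Set.indicator_le_indicator ?_
  rw [Measure.smul_apply, Measure.pi_singleton, Measure.pi_singleton, smul_eq_mul]
  calc ∏ i, ν i {x i} ≤ ∏ i, (C * ν' i {x i}) := Finset.prod_le_prod' fun i _ => h i _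
    _ = _ := by simp [Finset.prod_mul_distrib]

/-- number of grid points strictly below x -/
noncomputable def gridIdx (M : ℕ) (g : ℕ → ℝ) (x : ℝ) : ℕ :=
  ((Finset.range (M + 2)).filter fun l => g l < x).card

lemma gridIdx_mono (M : ℕ) (g : ℕ → ℝ) : Monotone (gridIdx M g) := by
  intro x y hxy
  refine Finset.card_le_card fun l hl => ?_
  simp only [Finset.mem_filter] at hl ⊢
  exact ⟨hl.1, hl.2.trans_le hxy⟩

lemma gridIdx_le_iff {M : ℕ} {g : ℕ → ℝ}
    (hgmono : ∀ l l' : ℕ, l < l' → l' ≤ M+1 → g l < g l') {l : ℕ} (hl : l ≤ M + 1) (x : ℝ) :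
    gridIdx M g x ≤ l ↔ x ≤ g l := by
  have hle : ∀ a b, a ≤ b → b ≤ M + 1 → g a ≤ g b := by
    intro a b hab hb
    rcases hab.eq_or_lt with rfl | h
    · exact le_rfl
    · exact (hgmono _ _ h hb).le
  constructor
  · intro h
    by_contra! hx
    have : (Finset.range (l + 1)).card ≤ gridIdx M g x := by
      refine Finset.card_le_card fun a ha => ?_
      simp only [Finset.mem_filter, Finset.mem_range] at ha ⊢
      exact ⟨by omega, (hle a l (by omega) hl).trans_lt hx⟩
    simp at this
    omega
  · intro h
    have : gridIdx M g x ≤ (Finset.range l).card := by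
      refine Finset.card_le_card fun a ha => ?_
      simp only [Finset.mem_filter, Finset.mem_range] at ha ⊢
      by_contra! hla
      exact absurd ((ha.2.trans_le h).trans_le (hle l a hla (by omega))) (lt_irrefl _)
    simpa using this

lemma gridIdx_self {M : ℕ} {g : ℕ → ℝ}
    (hgmono : ∀ l l' : ℕ, l < l' → l' ≤ M+1 → g l < g l') {l : ℕ} (hl : l ≤ M + 1) :
    gridIdx M g (g l) = l := by
  refine le_antisymm ((gridIdx_le_iff hgmono hl _).2 le_rfl) ?_
  by_contra! h
  have h2 := (gridIdx_le_iff hgmono (l := gridIdx M g (g l)) (by omega) (g l)).1 le_rfl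
  exact absurd (h2.trans_lt (hgmono _ _ h hl)) (lt_irrefl _)

lemma gridIdx_preimage {M : ℕ} {g : ℕ → ℝ} (hg0 : 0 ≤ g 0)
    (hgmono : ∀ l l' : ℕ, l < l' → l' ≤ M+1 → g l < g l') {l : ℕ} (hl : l ≤ M + 1) :
    gridIdx M g ⁻¹' {l} ∩ Set.Icc 0 1 =
      Set.Ioc (if l = 0 then (-1:ℝ) else g (l-1)) (g l) ∩ Set.Icc 0 1 := by
  ext x
  simp only [Set.mem_inter_iff, Set.mem_preimage, Set.mem_singleton_iff, Set.mem_Ioc, Set.mem_Icc]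
  refine and_congr_left fun hx => ?_
  have h1 := gridIdx_le_iff hgmono hl x
  split_ifs with h0
  · subst h0
    rw [← h1]
    constructor
    · intro h; exact ⟨by linarith, h.le⟩
    · intro h; omega
  · have h2 := gridIdx_le_iff hgmono (l := l - 1) (by omega) x
    rw [← h1, ← not_le, ← h2]
    omega

lemma pareto_bdd {n : ℕ} (c : Fin n → ℝ) (B : Finset (Fin n → ℝ))
    (h : ∀ b ∈ B, 0 ≤ ∑ i, c i * b i) (P : (Fin n → ℝ) → Prop) :
    0 ≤ sInf ((fun b => ∑ i, c i * b i) '' {b | b ∈ B ∧ P b}) ∧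
    sInf ((fun b => ∑ i, c i * b i) '' {b | b ∈ B ∧ P b}) ≤ ∑ b ∈ B, ∑ i, c i * b i := by
  constructor
  · apply Real.sInf_nonneg
    rintro _ ⟨b, hb, rfl⟩
    exact h b hb.1
  · rcases Set.eq_empty_or_nonempty {b | b ∈ B ∧ P b} with he | ⟨b, hb⟩
    · rw [he]; simp only [Set.image_empty, Real.sInf_empty]
      exact Finset.sum_nonneg h
    · refine le_trans (b := ∑ i, c i * b i) (csInf_le ⟨0, ?_⟩ ⟨b, hb, rfl⟩) ?_
      · rintro _ ⟨b, hb, rfl⟩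
        exact h b hb.1
      · exact Finset.single_le_sum (f := fun b : Fin n → ℝ => ∑ i, c i * b i) h hb.1

lemma integral_aux {n : ℕ} (ν ν' : Measure (Fin n → ℕ)) [IsProbabilityMeasure ν]
    [IsProbabilityMeasure ν'] (r : ℝ) (hr : 0 ≤ r) (h : ν ≤ ENNReal.ofReal r • ν')
    (F : (Fin n → ℕ) → ℝ) (K : ℝ) (h0 : ∀ y, 0 ≤ F y) (hK : ∀ y, F y ≤ K) :
    ∫ y, F y ∂ν ≤ r * ∫ y, F y ∂ν' := by
  have hi : Integrable F ν' := by
    refine Integrable.of_bound (measurable_of_countable F).aestronglyMeasurable K ?_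
    exact Filter.Eventually.of_forall fun y => by
      rw [Real.norm_of_nonneg (h0 y)]; exact hK y
  have := integral_mono_measure h (Filter.Eventually.of_forall h0)
    (hi.smul_measure ENNReal.ofReal_ne_top)
  rwa [integral_smul_measure, ENNReal.toReal_ofReal hr, smul_eq_mul] at this

theorem stmt17 {n : ℕ} (μ μt : Fin n → Measure ℝ)
    [∀ i, IsProbabilityMeasure (μ i)] [∀ i, IsProbabilityMeasure (μt i)]
    (hμ : ∀ i, μ i (Set.Icc 0 1) = 1)
    (ε : ℝ) (hε : ε ∈ Set.Ioo (0:ℝ) 1)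
    (M : ℕ) (g : ℕ → ℝ)
    (hg0 : 0 ≤ g 0)
    (hgmono : ∀ l l' : ℕ, l < l' → l' ≤ M+1 → g l < g l')
    (hgtop : g (M+1) = 1)
    (hsupp : ∀ i, μt i {x | ∃ l ≤ M+1, x = g l} = 1)
    (hsand : ∀ i, ∀ l ≤ M+1,
      ((1+ε)^2)⁻¹ *
          (μ i (Set.Ioc (if l = 0 then (-1:ℝ) else g (l-1)) (g l) ∩ Set.Icc 0 1)).toReal ≤
        (μt i {g l}).toReal ∧
      (μt i {g l}).toReal ≤
        (1+ε)^2 *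
          (μ i (Set.Ioc (if l = 0 then (-1:ℝ) else g (l-1)) (g l) ∩ Set.Icc 0 1)).toReal)
    (B : Finset (Fin n → ℝ)) (hB : ∀ b ∈ B, ∀ i, ∃ l ≤ M+1, b i = g l)
    (c : Fin n → ℝ) (hc : ∀ i, 0 ≤ c i) :
    (Measure.pi μ {x | ∃ b ∈ B, x ≤ b} = 1 ↔ Measure.pi μt {x | ∃ b ∈ B, x ≤ b} = 1) ∧
    (Measure.pi μ {x | ∃ b ∈ B, x ≤ b} = 1 →
      ((1+ε)^(2*n))⁻¹ * ∫ x, paretoMinF c B x ∂(Measure.pi μ) ≤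
          ∫ x, paretoMinF c B x ∂(Measure.pi μt) ∧
        ∫ x, paretoMinF c B x ∂(Measure.pi μt) ≤
          (1+ε)^(2*n) * ∫ x, paretoMinF c B x ∂(Measure.pi μ)) := by
  obtain ⟨hε0, hε1⟩ := hε
  set k := gridIdx M g with hk
  have hkm : Measurable k := (gridIdx_mono M g).measurable
  have hC : 0 < (1 + ε) ^ 2 := by positivity
  have hC1 : 0 < (1 + ε) ^ (2 * n) := by positivity
  haveI : ∀ i, IsProbabilityMeasure ((μ i).map k) := fun i =>
    Measure.isProbabilityMeasure_map hkm.aemeasurable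
  haveI : ∀ i, IsProbabilityMeasure ((μt i).map k) := fun i =>
    Measure.isProbabilityMeasure_map hkm.aemeasurable
  have hgle : ∀ l ≤ M + 1, g l ≤ 1 := by
    intro l hl
    rcases hl.eq_or_lt with rfl | h
    · exact hgtop.le
    · exact hgtop ▸ (hgmono _ _ h le_rfl).le
  have hgnn : ∀ l ≤ M + 1, 0 ≤ g l := by
    intro l hl
    rcases Nat.eq_zero_or_pos l with rfl | h
    · exact hg0
    · exact hg0.trans (hgmono _ _ h hl).le
  have hae : ∀ i, ∀ᵐ x ∂(μ i), x ∈ Set.Icc (0:ℝ) 1 := fun i =>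
    (mem_ae_iff_prob_eq_one measurableSet_Icc).2 (hμ i)
  have hSm : MeasurableSet {x | ∃ l ≤ M+1, x = g l} := by
    have : {x | ∃ l ≤ M+1, x = g l} = g '' Set.Iic (M+1) := by
      ext x; simp [eq_comm]
    rw [this]
    exact ((Set.finite_Iic _).image g).measurableSet
  have haet : ∀ i, ∀ᵐ x ∂(μt i), ∃ l ≤ M+1, x = g l := fun i =>
    (mem_ae_iff_prob_eq_one hSm).2 (hsupp i)
  have hν : ∀ i, ∀ l ≤ M + 1, (μ i).map k {l} =
      μ i (Set.Ioc (if l = 0 then (-1:ℝ) else g (l-1)) (g l) ∩ Set.Icc 0 1) := by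
    intro i l hl
    rw [Measure.map_apply hkm (measurableSet_singleton l), ← gridIdx_preimage hg0 hgmono hl]
    refine measure_congr ?_
    filter_upwards [hae i] with x hx
    exact propext ⟨fun h => ⟨h, hx⟩, fun h => h.1⟩
  have hνt : ∀ i, ∀ l ≤ M + 1, (μt i).map k {l} = μt i {g l} := by
    intro i l hl
    rw [Measure.map_apply hkm (measurableSet_singleton l)]
    refine measure_congr ?_
    filter_upwards [haet i] with x hx
    obtain ⟨m, hm, rfl⟩ := hx
    refine propext ⟨fun h => ?_, fun h => ?_⟩
    · have h' : k (g m) = l := h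
      rw [hk, gridIdx_self hgmono hm] at h'
      subst h'; rfl
    · have h' : g m = g l := h
      show k (g m) = l
      rw [h', hk, gridIdx_self hgmono hl]
  have hν0 : ∀ i, ∀ l, M + 1 < l → (μ i).map k {l} = 0 := by
    intro i l hl
    rw [Measure.map_apply hkm (measurableSet_singleton l)]
    have : ∀ᵐ x ∂(μ i), x ∉ k ⁻¹' {l} := by
      filter_upwards [hae i] with x hx h
      have h' : k x = l := h
      have : k x ≤ M + 1 := (gridIdx_le_iff hgmono le_rfl x).2 (hgtop ▸ hx.2)
      omega
    simpa using measure_eq_zero_iff_ae_notMem.2 this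
  have hνt0 : ∀ i, ∀ l, M + 1 < l → (μt i).map k {l} = 0 := by
    intro i l hl
    rw [Measure.map_apply hkm (measurableSet_singleton l)]
    have : ∀ᵐ x ∂(μt i), x ∉ k ⁻¹' {l} := by
      filter_upwards [haet i] with x hx h
      obtain ⟨m, hm, rfl⟩ := hx
      have h' : k (g m) = l := h
      rw [hk, gridIdx_self hgmono hm] at h'
      omega
    simpa using measure_eq_zero_iff_ae_notMem.2 this
  have key : ∀ a b : ENNReal, a ≠ ⊤ → b ≠ ⊤ → a.toReal ≤ (1+ε)^2 * b.toReal →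
      a ≤ ENNReal.ofReal ((1+ε)^2) * b := by
    intro a b ha hb h
    rw [← ENNReal.ofReal_toReal ha, ← ENNReal.ofReal_toReal hb, ← ENNReal.ofReal_mul hC.le]
    exact ENNReal.ofReal_le_ofReal h
  have hpow : ENNReal.ofReal ((1+ε)^2) ^ n = ENNReal.ofReal ((1+ε)^(2*n)) := by
    rw [← ENNReal.ofReal_pow hC.le, pow_mul]
  have le1 : Measure.pi (fun i => (μ i).map k) ≤
      ENNReal.ofReal ((1+ε)^(2*n)) • Measure.pi (fun i => (μt i).map k) := by
    rw [← hpow]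
    refine pi_le_aux _ _ _ fun i l => ?_
    rcases le_or_gt l (M+1) with hl | hl
    · rw [hν i l hl, hνt i l hl]
      refine key _ _ (measure_ne_top _ _) (measure_ne_top _ _) ?_
      exact (inv_mul_le_iff₀ hC).1 (hsand i l hl).1
    · rw [hν0 i l hl]; exact zero_le
  have le2 : Measure.pi (fun i => (μt i).map k) ≤
      ENNReal.ofReal ((1+ε)^(2*n)) • Measure.pi (fun i => (μ i).map k) := by
    rw [← hpow]
    refine pi_le_aux _ _ _ fun i l => ?_
    rcases le_or_gt l (M+1) with hl | hl
    · rw [hν i l hl, hνt i l hl]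
      exact key _ _ (measure_ne_top _ _) (measure_ne_top _ _) (hsand i l hl).2
    · rw [hνt0 i l hl]; exact zero_le
  have hKm : Measurable (fun (x : Fin n → ℝ) i => k (x i)) := by fun_prop
  have m1 : Measure.pi (fun i => (μ i).map k) = (Measure.pi μ).map (fun x i => k (x i)) :=
    (Measure.pi_map_pi (fun i => hkm.aemeasurable)).symm
  have m2 : Measure.pi (fun i => (μt i).map k) = (Measure.pi μt).map (fun x i => k (x i)) :=
    (Measure.pi_map_pi (fun i => hkm.aemeasurable)).symm
  have hle : ∀ b ∈ B, ∀ x : Fin n → ℝ, x ≤ b ↔ (fun i => k (x i)) ≤ fun i => k (b i) := by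
    intro b hb x
    rw [Pi.le_def, Pi.le_def]
    refine forall_congr' fun i => ?_
    obtain ⟨l, hl, h⟩ := hB b hb i
    show _ ↔ k (x i) ≤ k (b i)
    rw [h, hk, gridIdx_self hgmono hl, gridIdx_le_iff hgmono hl]
  have hset : {x : Fin n → ℝ | ∃ b ∈ B, x ≤ b} =
      (fun (x : Fin n → ℝ) i => k (x i)) ⁻¹' {y | ∃ b ∈ B, y ≤ fun i => k (b i)} := by
    ext x
    exact exists_congr fun b => and_congr_right fun hb => hle b hb x
  let F : (Fin n → ℕ) → ℝ := fun y =>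
    sInf ((fun b => ∑ i, c i * b i) '' {b | b ∈ B ∧ y ≤ fun i => k (b i)})
  have hF : ∀ x, paretoMinF c B x = F (fun i => k (x i)) := by
    intro x
    have : {b | b ∈ B ∧ x ≤ b} = {b | b ∈ B ∧ (fun i => k (x i)) ≤ fun i => k (b i)} := by
      ext b
      exact and_congr_right fun hb => hle b hb x
    simp only [paretoMinF, F, this]
  have hnn : ∀ b ∈ B, 0 ≤ ∑ i, c i * b i := by
    intro b hb
    refine Finset.sum_nonneg fun i _ => mul_nonneg (hc i) ?_
    obtain ⟨l, hl, h⟩ := hB b hb i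
    exact h ▸ hgnn l hl
  have hT : MeasurableSet {y : Fin n → ℕ | ∃ b ∈ B, y ≤ fun i => k (b i)} :=
    (Set.to_countable _).measurableSet
  have i1 : ∫ x, paretoMinF c B x ∂(Measure.pi μ) =
      ∫ y, F y ∂(Measure.pi (fun i => (μ i).map k)) := by
    rw [m1, integral_map hKm.aemeasurable (measurable_of_countable F).aestronglyMeasurable]
    exact integral_congr_ae (Filter.Eventually.of_forall hF)
  have i2 : ∫ x, paretoMinF c B x ∂(Measure.pi μt) =
      ∫ y, F y ∂(Measure.pi (fun i => (μt i).map k)) := by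
    rw [m2, integral_map hKm.aemeasurable (measurable_of_countable F).aestronglyMeasurable]
    exact integral_congr_ae (Filter.Eventually.of_forall hF)
  refine ⟨?_, fun _ => ⟨?_, ?_⟩⟩
  · rw [hset, ← Measure.map_apply hKm hT, ← Measure.map_apply hKm hT, ← m1, ← m2,
      ← prob_compl_eq_zero_iff hT, ← prob_compl_eq_zero_iff hT]
    constructor
    · intro h
      have := le2 {y : Fin n → ℕ | ∃ b ∈ B, y ≤ fun i => k (b i)}ᶜ
      rw [Measure.smul_apply, h] at this
      simpa using this
    · intro h
      have := le1 {y : Fin n → ℕ | ∃ b ∈ B, y ≤ fun i => k (b i)}ᶜ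
      rw [Measure.smul_apply, h] at this
      simpa using this
  · rw [inv_mul_le_iff₀ hC1, i1, i2]
    exact integral_aux _ _ _ hC1.le le1 F _ (fun y => (pareto_bdd c B hnn _).1)
      (fun y => (pareto_bdd c B hnn _).2)
  · rw [i1, i2]
    exact integral_aux _ _ _ hC1.le le2 F _ (fun y => (pareto_bdd c B hnn _).1)
      (fun y => (pareto_bdd c B hnn _).2)
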